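/- Let Ã be a symmetric N×N real matrix, W an H×H real matrix, V an F×H real matrix, and X an N×F real matrix, with K = ρ(Ã) · ‖W‖₂ < 1. Let H* be the unique fixed point of the reservoir map Φ(M) = tanh(Ã M W + X V), and let H_t be the iterates H_{t+1} = Φ(H_t) from an arbitrary initial condition H₀. Then for every t ≥ 0, ‖H* − H_t‖_F ≤ K^t · ‖H* − H₀‖_F. -/

import Mathlib

noncomputable def frobNorm {m n : Type*} [Fintype m] [Fintype n]
    (M : Matrix m n ℝ) : ℝ :=
  Real.sqrt (∑ i, ∑ j, (M i j) ^ 2)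

noncomputable def specNorm {m n : ℕ} (M : Matrix (Fin m) (Fin n) ℝ) : ℝ :=
  ‖LinearMap.toContinuousLinearMap (Matrix.toEuclideanLin M)‖

noncomputable def specRad {n : ℕ} (A : Matrix (Fin n) (Fin n) ℝ)
    (hA : A.IsHermitian) : ℝ :=
  ⨆ i, |hA.eigenvalues i|

noncomputable def mtanh {m n : Type*} (M : Matrix m n ℝ) : Matrix m n ℝ :=
  Matrix.of fun i j => Real.tanh (M i j)

noncomputable def resMap {N F Hd : ℕ} (Atil : Matrix (Fin N) (Fin N) ℝ)
    (W : Matrix (Fin Hd) (Fin Hd) ℝ) (V : Matrix (Fin F) (Fin Hd) ℝ)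
    (X : Matrix (Fin N) (Fin F) ℝ) (M : Matrix (Fin N) (Fin Hd) ℝ) :
    Matrix (Fin N) (Fin Hd) ℝ :=
  mtanh (Atil * M * W + X * V)

open scoped Matrix.Norms.L2Operator in
lemma aux_specNorm_eq {m n : ℕ} (M : Matrix (Fin m) (Fin n) ℝ) : specNorm M = ‖M‖ := rfl

open scoped Matrix.Norms.L2Operator in
lemma aux_specNorm_transpose {m n : ℕ} (M : Matrix (Fin m) (Fin n) ℝ) :
    specNorm M.transpose = specNorm M := by
  rw [aux_specNorm_eq, aux_specNorm_eq, ← Matrix.l2_opNorm_conjTranspose M,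
    Matrix.conjTranspose_eq_transpose_of_trivial]

lemma aux_specNorm_nonneg {m n : ℕ} (M : Matrix (Fin m) (Fin n) ℝ) : 0 ≤ specNorm M :=
  norm_nonneg _

lemma aux_specRad_nonneg {n : ℕ} (A : Matrix (Fin n) (Fin n) ℝ)
    (hA : A.IsHermitian) : 0 ≤ specRad A hA :=
  Real.iSup_nonneg fun _ => abs_nonneg _

open scoped Matrix.Norms.L2Operator in
lemma aux_specNorm_le {n : ℕ} (A : Matrix (Fin n) (Fin n) ℝ)
    (hA : A.IsHermitian) : specNorm A ≤ specRad A hA := by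
  rw [aux_specNorm_eq]
  have h := hA.spectral_theorem
  rw [Unitary.conjStarAlgAut_apply] at h
  have h2 : ‖A‖ = ‖(Matrix.diagonal (RCLike.ofReal ∘ hA.eigenvalues) : Matrix (Fin n) (Fin n) ℝ)‖ := by
    conv_lhs => rw [h]
    rw [← Unitary.coe_star, CStarRing.norm_mul_coe_unitary, CStarRing.norm_coe_unitary_mul]
  rw [h2, Matrix.l2_opNorm_diagonal, pi_norm_le_iff_of_nonneg (aux_specRad_nonneg A hA)]
  intro i
  exact le_ciSup (f := fun i => |hA.eigenvalues i|) (Set.finite_range _).bddAbove i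

lemma aux_frob_transpose {m n : ℕ} (M : Matrix (Fin m) (Fin n) ℝ) :
    frobNorm M.transpose = frobNorm M := by
  unfold frobNorm
  rw [Finset.sum_comm]
  rfl

lemma aux_frob_mul {l m n : ℕ} (A : Matrix (Fin l) (Fin m) ℝ) (M : Matrix (Fin m) (Fin n) ℝ) :
    frobNorm (A * M) ≤ specNorm A * frobNorm M := by
  unfold frobNorm
  apply Real.sqrt_le_iff.2
  refine ⟨mul_nonneg (aux_specNorm_nonneg A) (Real.sqrt_nonneg _), ?_⟩
  rw [mul_pow, Real.sq_sqrt (by positivity), Finset.sum_comm,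
    Finset.sum_comm (f := fun i j => M i j ^ 2), Finset.mul_sum]
  refine Finset.sum_le_sum fun j _ => ?_
  have h := (LinearMap.toContinuousLinearMap (Matrix.toEuclideanLin A)).le_opNorm
    (WithLp.toLp 2 (fun i => M i j))
  have h2 := pow_le_pow_left₀ (norm_nonneg _) h 2
  rw [mul_pow, EuclideanSpace.norm_sq_eq, EuclideanSpace.norm_sq_eq] at h2
  simpa [specNorm, Matrix.mul_apply, Matrix.mulVec, dotProduct, Matrix.toLpLin_apply] using h2

lemma aux_tanh (x y : ℝ) : |Real.tanh x - Real.tanh y| ≤ |x - y| := by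
  have hd : ∀ z : ℝ, HasDerivAt Real.tanh (1 / Real.cosh z ^ 2) z := by
    intro z
    have h := (Real.hasDerivAt_sinh z).div (Real.hasDerivAt_cosh z) (Real.cosh_pos z).ne'
    have e : Real.tanh = Real.sinh / Real.cosh := by
      funext w; exact Real.tanh_eq_sinh_div_cosh w
    rw [e]
    have h3 : Real.cosh z * Real.cosh z - Real.sinh z * Real.sinh z = 1 := by
      have := Real.cosh_sq z
      nlinarith
    rw [h3] at h
    exact h
  have := Convex.norm_image_sub_le_of_norm_hasDerivWithin_le (f := Real.tanh) (C := 1)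
    (s := Set.univ) (x := y) (y := x) (fun z _ => (hd z).hasDerivWithinAt) (fun z _ => by
      have h1 := Real.one_le_cosh z
      rw [Real.norm_of_nonneg (by positivity)]
      rw [div_le_one (by positivity)]
      exact one_le_pow₀ h1) convex_univ trivial trivial
  simpa using this

lemma aux_contract {N F Hd : ℕ}
    (Atil : Matrix (Fin N) (Fin N) ℝ) (hA : Atil.IsHermitian)
    (W : Matrix (Fin Hd) (Fin Hd) ℝ) (V : Matrix (Fin F) (Fin Hd) ℝ)
    (X : Matrix (Fin N) (Fin F) ℝ) (P Q : Matrix (Fin N) (Fin Hd) ℝ) :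
    frobNorm (resMap Atil W V X P - resMap Atil W V X Q)
      ≤ specRad Atil hA * specNorm W * frobNorm (P - Q) := by
  have h1 : frobNorm (resMap Atil W V X P - resMap Atil W V X Q)
      ≤ frobNorm (Atil * ((P - Q) * W)) := by
    unfold frobNorm
    apply Real.sqrt_le_sqrt
    refine Finset.sum_le_sum fun i _ => Finset.sum_le_sum fun j _ => ?_
    apply sq_le_sq.2
    have e : (Atil * ((P - Q) * W)) i j =
        (Atil * P * W + X * V) i j - (Atil * Q * W + X * V) i j := by
      rw [Matrix.sub_mul, Matrix.mul_sub, ← Matrix.mul_assoc, ← Matrix.mul_assoc]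
      simp
    rw [e]
    exact aux_tanh _ _
  have h2 : frobNorm ((P - Q) * W) ≤ specNorm W * frobNorm (P - Q) := by
    rw [← aux_frob_transpose, Matrix.transpose_mul, ← aux_specNorm_transpose W,
      ← aux_frob_transpose (P - Q)]
    exact aux_frob_mul _ _
  calc _ ≤ _ := h1
    _ ≤ specNorm Atil * frobNorm ((P - Q) * W) := aux_frob_mul _ _
    _ ≤ specRad Atil hA * (specNorm W * frobNorm (P - Q)) :=
      mul_le_mul (aux_specNorm_le _ hA) h2 (Real.sqrt_nonneg _) (aux_specRad_nonneg _ hA)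
    _ = _ := by ring

/-- Inequality (12): ‖H* − H_t‖_F ≤ K^t ‖H* − H₀‖_F. -/
theorem reservoir_iterates_dist_le {N F Hd : ℕ}
    (Atil : Matrix (Fin N) (Fin N) ℝ) (hA : Atil.IsHermitian)
    (W : Matrix (Fin Hd) (Fin Hd) ℝ) (V : Matrix (Fin F) (Fin Hd) ℝ)
    (X : Matrix (Fin N) (Fin F) ℝ)
    (hK : specRad Atil hA * specNorm W < 1)
    (Hstar : Matrix (Fin N) (Fin Hd) ℝ)
    (hfix : resMap Atil W V X Hstar = Hstar)
    (H0 : Matrix (Fin N) (Fin Hd) ℝ) (t : ℕ) :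
    frobNorm (Hstar - (resMap Atil W V X)^[t] H0)
      ≤ (specRad Atil hA * specNorm W) ^ t * frobNorm (Hstar - H0) := by
  induction t with
  | zero => simp
  | succ k ih =>
    rw [Function.iterate_succ_apply']
    have h := aux_contract Atil hA W V X Hstar ((resMap Atil W V X)^[k] H0)
    rw [hfix] at h
    refine h.trans ?_
    rw [pow_succ', mul_assoc (specRad Atil hA * specNorm W)]
    exact mul_le_mul_of_nonneg_left ih
      (mul_nonneg (aux_specRad_nonneg _ hA) (aux_specNorm_nonneg _))
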